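/- arXiv:1612.08013 — 2 statements merged into one kernel-verified Lean document; each statement's English description precedes it below -/
import Mathlib

section
/- Let f^N and g be functions in the velocity span, continuous on Ω̄, and let E^N : Ω_x → ℝ be bounded and measurable. Then ∫_Ω g(x,v)·R^N(x,v) dv dx = −(1/2)·∫_{Ω_x} E^N(x)·[ f^N(x,v_max)·g(x,v_max) − f^N(x,v_min)·g(x,v_min) ] dx. -/
open MeasureTheory Real

/-!
Orthonormality makes `K(w, v) = ∑ₙ φₙ(w) φₙ(v)` the reproducing kernel of the velocity span:
`∫ h(v) K(w, v) dv = h(w)` for every `h` in the span. For fixed `x`, the penalty `R^N(x, ·)` is a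
combination of `K(v_max, ·)` and `K(v_min, ·)`, so integrating it against `g(x, ·)` evaluates `g` at
the two ends of the velocity interval; it remains to integrate over `x`.
-/

section BoundedOnCompacts

variable {X V : Type*} [TopologicalSpace X] [MeasurableSpace X] [OpensMeasurableSpace X]
  [TopologicalSpace V] {μ : Measure X} [IsFiniteMeasureOnCompacts μ] {K s : Set X} {S : Set V}

lemma memLp_restrict_of_continuousOn_isCompact {f : X → ℝ} (p : ENNReal) (hf : ContinuousOn f K)
    (hK : IsCompact K) (hs : MeasurableSet s) (hsK : s ⊆ K) : MemLp f p (μ.restrict s) := by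
  obtain ⟨C, hC⟩ := hK.exists_bound_of_continuousOn hf
  have : IsFiniteMeasure (μ.restrict s) :=
    isFiniteMeasure_restrict.2 (measure_lt_top_mono hsK hK.measure_lt_top).ne
  exact .of_bound ((hf.mono hsK).aestronglyMeasurable hs) C
    (ae_restrict_of_forall_mem hs fun x hx => hC x (hsK hx))

lemma integrableOn_mul_sub_of_continuousOn_prod {E : X → ℝ} {h : X × V → ℝ} {a b : V}
    (hE : AEStronglyMeasurable E (μ.restrict s)) (hEb : ∃ C, ∀ x ∈ s, |E x| ≤ C)
    (hh : ContinuousOn h (K ×ˢ S)) (hK : IsCompact K) (hs : MeasurableSet s) (hsK : s ⊆ K)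
    (ha : a ∈ S) (hb : b ∈ S) :
    IntegrableOn (fun x => E x * (h (x, b) - h (x, a))) s μ := by
  have slice_continuousOn {v : V} (hv : v ∈ S) : ContinuousOn (fun x => h (x, v)) K :=
    hh.comp (by fun_prop) fun x hx => ⟨hx, hv⟩
  have jump_integrable : Integrable (fun x => h (x, b) - h (x, a)) (μ.restrict s) :=
    memLp_one_iff_integrable.1 <| memLp_restrict_of_continuousOn_isCompact 1
      ((slice_continuousOn hb).sub (slice_continuousOn ha)) hK hs hsK
  obtain ⟨C, hC⟩ := hEb
  exact jump_integrable.bdd_mul hE (ae_restrict_of_forall_mem hs hC)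

end BoundedOnCompacts

section VelocitySpan

variable {X V ι : Type*} [Fintype ι]

/-- The velocity span: `h` agrees on `S` with a linear combination of the `φ n`. Values outside `S`
are not constrained. -/
def MemSpanOn (φ : ι → V → ℝ) (S : Set V) (h : V → ℝ) : Prop :=
  ∃ c : ι → ℝ, ∀ v ∈ S, h v = ∑ n, c n * φ n v

/-- The kernel `∑ₙ φₙ(w) φₙ(v)`, which reproduces the span of an orthonormal family `φ`. -/
def spanKernel (φ : ι → V → ℝ) (w v : V) : ℝ :=
  ∑ n, φ n w * φ n v

/-- The penalty term `R^N` of the field `E` and the density `f`, with `a` and `b` the lower and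
upper velocity boundary points. -/
noncomputable def boundaryPenalty (φ : ι → V → ℝ) (a b : V) (E : X → ℝ) (f : X × V → ℝ) :
    X × V → ℝ :=
  fun p => -(1 / 2) * E p.1 *
    (f (p.1, b) * spanKernel φ b p.2 - f (p.1, a) * spanKernel φ a p.2)

/-- An `L²(ν)`-orthonormal family, as functions rather than `L²` classes because the penalty
evaluates them at single points. -/
structure IsOrthonormalFamily [DecidableEq ι] [MeasurableSpace V] (φ : ι → V → ℝ) (ν : Measure V) :
    Prop where
  memLp (n : ι) : MemLp (φ n) 2 ν
  integral_mul (n m : ι) : ∫ v, φ n v * φ m v ∂ν = if n = m then 1 else 0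

variable [MeasurableSpace V] {ν : Measure V} {φ : ι → V → ℝ} {S : Set V} {h : V → ℝ} {a b w : V}

lemma memLp_sum_const_mul {p : ENNReal} (hφ : ∀ n, MemLp (φ n) p ν) (c : ι → ℝ) :
    MemLp (fun v => ∑ n, c n * φ n v) p ν :=
  memLp_finsetSum _ fun n _ => (hφ n).const_mul (c n)

lemma memLp_spanKernel {p : ENNReal} (hφ : ∀ n, MemLp (φ n) p ν) (w : V) :
    MemLp (spanKernel φ w) p ν :=
  memLp_sum_const_mul hφ fun n => φ n w

lemma MemSpanOn.memLp {p : ENNReal} (hh : MemSpanOn φ S h) (hφ : ∀ n, MemLp (φ n) p ν)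
    (hS : ∀ᵐ v ∂ν, v ∈ S) : MemLp h p ν := by
  obtain ⟨c, hc⟩ := hh
  exact (memLp_congr_ae (hS.mono hc)).2 (memLp_sum_const_mul hφ c)

variable [DecidableEq ι]

lemma IsOrthonormalFamily.integral_sum_mul (hφ : IsOrthonormalFamily φ ν) (c : ι → ℝ) (m : ι) :
    ∫ v, (∑ n, c n * φ n v) * φ m v ∂ν = c m := by
  have term_integrable (n : ι) : Integrable (fun v => c n * (φ n v * φ m v)) ν :=
    ((hφ.memLp n).integrable_mul (hφ.memLp m)).const_mul (c n)
  calc ∫ v, (∑ n, c n * φ n v) * φ m v ∂ν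
      = ∫ v, ∑ n, c n * (φ n v * φ m v) ∂ν := by simp only [Finset.sum_mul, mul_assoc]
    _ = ∑ n, c n * ∫ v, φ n v * φ m v ∂ν := by
      simp only [integral_finsetSum _ fun n _ => term_integrable n, integral_const_mul]
    _ = c m := by simp [hφ.integral_mul]

lemma MemSpanOn.integral_mul_spanKernel (hh : MemSpanOn φ S h)
    (hφ : IsOrthonormalFamily φ ν) (hS : ∀ᵐ v ∂ν, v ∈ S) (hw : w ∈ S) :
    ∫ v, h v * spanKernel φ w v ∂ν = h w := by
  have term_integrable (n : ι) : Integrable (fun v => φ n w * (h v * φ n v)) ν :=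
    ((hh.memLp hφ.memLp hS).integrable_mul (hφ.memLp n)).const_mul (φ n w)
  obtain ⟨c, hc⟩ := hh
  have coeff (n : ι) : ∫ v, h v * φ n v ∂ν = c n := by
    rw [← hφ.integral_sum_mul c n]
    exact integral_congr_ae (hS.mono fun v hv => congrArg (· * φ n v) (hc v hv))
  calc ∫ v, h v * spanKernel φ w v ∂ν
      = ∫ v, ∑ n, φ n w * (h v * φ n v) ∂ν := by
        simp only [spanKernel, Finset.mul_sum, mul_left_comm]
    _ = ∑ n, φ n w * ∫ v, h v * φ n v ∂ν := by
      simp only [integral_finsetSum _ fun n _ => term_integrable n, integral_const_mul]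
    _ = ∑ n, c n * φ n w := Finset.sum_congr rfl fun n _ => by rw [coeff, mul_comm]
    _ = h w := (hc w hw).symm

lemma MemSpanOn.integral_mul_boundaryPenalty (hh : MemSpanOn φ S h)
    (hφ : IsOrthonormalFamily φ ν) (hS : ∀ᵐ v ∂ν, v ∈ S) (ha : a ∈ S) (hb : b ∈ S)
    (E : X → ℝ) (f : X × V → ℝ) (x : X) :
    ∫ v, h v * boundaryPenalty φ a b E f (x, v) ∂ν =
      -(1 / 2) * (E x * (f (x, b) * h b - f (x, a) * h a)) := by
  have kernel_integrable (w : V) : Integrable (fun v => h v * spanKernel φ w v) ν :=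
    (hh.memLp hφ.memLp hS).integrable_mul (memLp_spanKernel hφ.memLp w)
  calc ∫ v, h v * boundaryPenalty φ a b E f (x, v) ∂ν
      = ∫ v, -(1 / 2) * E x * (f (x, b) * (h v * spanKernel φ b v) -
          f (x, a) * (h v * spanKernel φ a v)) ∂ν := by
        congr with v
        simp only [boundaryPenalty]
        ring
    _ = -(1 / 2) * E x * (f (x, b) * ∫ v, h v * spanKernel φ b v ∂ν -
          f (x, a) * ∫ v, h v * spanKernel φ a v ∂ν) := by
        rw [integral_const_mul, integral_sub ((kernel_integrable b).const_mul _)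
          ((kernel_integrable a).const_mul _), integral_const_mul, integral_const_mul]
    _ = -(1 / 2) * (E x * (f (x, b) * h b - f (x, a) * h a)) := by
        rw [hh.integral_mul_spanKernel hφ hS hb,
          hh.integral_mul_spanKernel hφ hS ha, mul_assoc]

theorem stmt2_general [MeasurableSpace X] {μ : Measure X} (hφ : IsOrthonormalFamily φ ν)
    (hS : ∀ᵐ v ∂ν, v ∈ S) (ha : a ∈ S) (hb : b ∈ S) (E : X → ℝ) (f g : X × V → ℝ)
    (hg : ∀ᵐ x ∂μ, MemSpanOn φ S fun v => g (x, v))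
    (hint : Integrable (fun x => E x * (f (x, b) * g (x, b) - f (x, a) * g (x, a))) μ) :
    Integrable (fun x => ∫ v, g (x, v) * boundaryPenalty φ a b E f (x, v) ∂ν) μ ∧
      ∫ x, ∫ v, g (x, v) * boundaryPenalty φ a b E f (x, v) ∂ν ∂μ =
        -(1 / 2) * ∫ x, E x * (f (x, b) * g (x, b) - f (x, a) * g (x, a)) ∂μ := by
  have slice_integral : (fun x => ∫ v, g (x, v) * boundaryPenalty φ a b E f (x, v) ∂ν) =ᵐ[μ]
      fun x => -(1 / 2) * (E x * (f (x, b) * g (x, b) - f (x, a) * g (x, a))) :=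
    hg.mono fun x hx =>
      hx.integral_mul_boundaryPenalty hφ hS ha hb E f x
  exact ⟨(hint.const_mul _).congr slice_integral.symm,
    (integral_congr_ae slice_integral).trans (integral_const_mul _ _)⟩

end VelocitySpan

/-- For `f^N`, `g` in the velocity span (continuous on `Ω̄`) and `E^N`
bounded measurable, the integral of `g·R^N` over `Ω` equals the boundary expression
`−(1/2)∫_{Ω_x} E^N (f^N(·,v_max) g(·,v_max) − f^N(·,v_min) g(·,v_min))`. -/
theorem stmt2 (vmin vmax : ℝ) (hv : vmin < vmax)
    (NS : ℕ) (hNS : 1 ≤ NS) (φ : Fin NS → ℝ → ℝ)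
    (hφc : ∀ n, ContinuousOn (φ n) (Set.Icc vmin vmax))
    (hortho : ∀ n m : Fin NS,
      (∫ v in Set.Ioo vmin vmax, φ n v * φ m v) = if n = m then (1 : ℝ) else 0)
    (fN g : ℝ × ℝ → ℝ)
    (hfNc : ContinuousOn fN (Set.Icc (0 : ℝ) (2 * π) ×ˢ Set.Icc vmin vmax))
    (hgc : ContinuousOn g (Set.Icc (0 : ℝ) (2 * π) ×ˢ Set.Icc vmin vmax))
    (hfNspan : ∀ x ∈ Set.Ico (0 : ℝ) (2 * π), ∃ c : Fin NS → ℝ,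
      ∀ v ∈ Set.Icc vmin vmax, fN (x, v) = ∑ n, c n * φ n v)
    (hgspan : ∀ x ∈ Set.Ico (0 : ℝ) (2 * π), ∃ c : Fin NS → ℝ,
      ∀ v ∈ Set.Icc vmin vmax, g (x, v) = ∑ n, c n * φ n v)
    (EN : ℝ → ℝ) (hENm : Measurable EN)
    (hENb : ∃ C, ∀ x ∈ Set.Ico (0 : ℝ) (2 * π), |EN x| ≤ C)
    (RN : ℝ × ℝ → ℝ)
    (hRN : ∀ x v, RN (x, v) = -(1 / 2) * EN x *
      (fN (x, vmax) * (∑ n, φ n vmax * φ n v) - fN (x, vmin) * (∑ n, φ n vmin * φ n v))) :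
    (∫ x in Set.Ioo (0 : ℝ) (2 * π), ∫ v in Set.Ioo vmin vmax, g (x, v) * RN (x, v))
      = -(1 / 2) * ∫ x in Set.Ioo (0 : ℝ) (2 * π),
          EN x * (fN (x, vmax) * g (x, vmax) - fN (x, vmin) * g (x, vmin)) := by
  have hIoo {r s : ℝ} : Set.Ioo r s ⊆ Set.Icc r s := Set.Ioo_subset_Icc_self
  have hIco : Set.Ioo (0 : ℝ) (2 * π) ⊆ Set.Ico 0 (2 * π) := Set.Ioo_subset_Ico_self
  have ha : vmin ∈ Set.Icc vmin vmax := Set.left_mem_Icc.2 hv.le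
  have hb : vmax ∈ Set.Icc vmin vmax := Set.right_mem_Icc.2 hv.le
  have hφ : IsOrthonormalFamily φ (volume.restrict (Set.Ioo vmin vmax)) :=
    ⟨fun n => memLp_restrict_of_continuousOn_isCompact 2 (hφc n) isCompact_Icc measurableSet_Ioo
      hIoo, hortho⟩
  have hint : IntegrableOn (fun x =>
      EN x * (fN (x, vmax) * g (x, vmax) - fN (x, vmin) * g (x, vmin))) (Set.Ioo 0 (2 * π)) :=
    integrableOn_mul_sub_of_continuousOn_prod hENm.aestronglyMeasurable
      (hENb.imp fun _ hC x h => hC x (hIco h)) (hfNc.mul hgc) isCompact_Icc measurableSet_Ioo hIoo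
      ha hb
  obtain rfl : RN = boundaryPenalty φ vmin vmax EN fN := funext fun ⟨x, v⟩ => hRN x v
  exact (stmt2_general hφ (ae_restrict_of_forall_mem measurableSet_Ioo fun _ h => hIoo h) ha hb EN
    fN g (ae_restrict_of_forall_mem measurableSet_Ioo fun x h => hgspan x (hIco h))
    hint).2
end

section
/- Let f^N and g be continuously differentiable functions on Ω̄ that both lie in the velocity span, are 2π-periodic in x (f^N(0,v) = f^N(2π,v) and g(0,v) = g(2π,v) for all v), and let E^N : [0,2π] → ℝ be continuous with E^N(0) = E^N(2π). Writing F^N(x,v) = (v, −E^N(x)) and ∇ = (∂/∂x, ∂/∂v), it holds that ∫_Ω g·(F^N·∇f^N) dv dx + ∫_Ω f^N·(F^N·∇g) dv dx = 2·∫_Ω g·R^N dv dx. -/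
open MeasureTheory Real

/-!
Since `F = (v, -E(x))` is divergence free, the product rule turns the left-hand side into
`∫_Ω F·∇(f g)`, which is a boundary integral. The part over `x = 0, 2π` vanishes by periodicity;
the part over `v = v_min, v_max` is `-∫ E(x) [f g]_{v_min}^{v_max} dx`. The sums in the penalty term
are the kernel of the orthogonal projection onto the velocity span, which contains `g(x, ·)`, so
integrating them against `g(x, ·)` evaluates `g` at `v_max` and `v_min`, giving the same boundary
integral.
-/

section ProjectionKernel

variable {X ι : Type*} [Fintype ι]

/-- The kernel `K(w, v) = ∑ n, φ n w * φ n v`. When the family `φ` is orthonormal in `L²`, this is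
the integral kernel of the orthogonal projection onto its span. -/
def projectionKernel (φ : ι → X → ℝ) (w v : X) : ℝ := ∑ n, φ n w * φ n v

variable [MeasurableSpace X] {μ : Measure X} {φ : ι → X → ℝ}

lemma memLp_two_of_integral_mul_self_ne_zero {f : X → ℝ} (hf : AEStronglyMeasurable f μ)
    (h : ∫ v, f v * f v ∂μ ≠ 0) : MemLp f 2 μ := by
  simp only [← sq] at h
  exact (memLp_two_iff_integrable_sq hf).2 (.of_integral_ne_zero h)

lemma memLp_sum_mul {p : ENNReal} (hφ : ∀ n, MemLp (φ n) p μ) (c : ι → ℝ) :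
    MemLp (fun v => ∑ n, c n * φ n v) p μ :=
  memLp_finsetSum _ fun n _ => (hφ n).const_mul (c n)

variable [DecidableEq ι]

lemma integral_sum_mul_sum_of_orthonormal (hφ : ∀ n, MemLp (φ n) 2 μ)
    (hortho : ∀ n m, ∫ v, φ n v * φ m v ∂μ = if n = m then 1 else 0) (c d : ι → ℝ) :
    ∫ v, (∑ n, c n * φ n v) * (∑ m, d m * φ m v) ∂μ = ∑ n, c n * d n := by
  have hint (n m : ι) : Integrable (fun v => c n * φ n v * (d m * φ m v)) μ :=
    ((hφ n).const_mul _).integrable_mul ((hφ m).const_mul _)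
  have hterm (n m : ι) :
      ∫ v, c n * φ n v * (d m * φ m v) ∂μ = c n * d m * if n = m then 1 else 0 := by
    rw [← hortho, ← integral_const_mul]
    simp only [mul_mul_mul_comm]
  simp_rw [Finset.sum_mul_sum]
  rw [integral_finsetSum _ fun n _ => integrable_finsetSum _ fun m _ => hint n m]
  simp_rw [integral_finsetSum _ fun m _ => hint _ m, hterm]
  simp

lemma integral_sum_mul_projectionKernel (hφ : ∀ n, MemLp (φ n) 2 μ)
    (hortho : ∀ n m, ∫ v, φ n v * φ m v ∂μ = if n = m then 1 else 0) (c : ι → ℝ) (w : X) :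
    ∫ v, (∑ n, c n * φ n v) * projectionKernel φ w v ∂μ = ∑ n, c n * φ n w :=
  integral_sum_mul_sum_of_orthonormal hφ hortho c fun n => φ n w

lemma integral_mul_sub_projectionKernel (hφ : ∀ n, MemLp (φ n) 2 μ)
    (hortho : ∀ n m, ∫ v, φ n v * φ m v ∂μ = if n = m then 1 else 0) {u : X → ℝ} {c : ι → ℝ}
    (hu : u =ᵐ[μ] fun v => ∑ n, c n * φ n v) {w₀ w₁ : X} (hw₀ : u w₀ = ∑ n, c n * φ n w₀)
    (hw₁ : u w₁ = ∑ n, c n * φ n w₁) (r₀ r₁ : ℝ) :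
    ∫ v, u v * (r₁ * projectionKernel φ w₁ v - r₀ * projectionKernel φ w₀ v) ∂μ
      = r₁ * u w₁ - r₀ * u w₀ := by
  have hint (w : X) (r : ℝ) :
      Integrable (fun v => r * ((∑ n, c n * φ n v) * projectionKernel φ w v)) μ :=
    ((memLp_sum_mul hφ c).integrable_mul (memLp_sum_mul hφ fun n => φ n w)).const_mul r
  calc ∫ v, u v * (r₁ * projectionKernel φ w₁ v - r₀ * projectionKernel φ w₀ v) ∂μ
      = ∫ v, (r₁ * ((∑ n, c n * φ n v) * projectionKernel φ w₁ v)
          - r₀ * ((∑ n, c n * φ n v) * projectionKernel φ w₀ v)) ∂μ :=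
        integral_congr_ae <| hu.mono fun v hv => by simp only [hv]; ring
    _ = r₁ * u w₁ - r₀ * u w₀ := by
        rw [integral_sub (hint w₁ r₁) (hint w₀ r₀), integral_const_mul, integral_const_mul,
          integral_sum_mul_projectionKernel hφ hortho,
          integral_sum_mul_projectionKernel hφ hortho, ← hw₀, ← hw₁]

end ProjectionKernel

section Advection

/-- The advection term `F·∇f` for the phase-space field `F(x, v) = (a(v), -E(x))`; the Vlasov
equation has `a(v) = v`. Points of phase space are pairs `(x, v)`. -/
noncomputable def advection (a E : ℝ → ℝ) (f : ℝ × ℝ → ℝ) (p : ℝ × ℝ) : ℝ :=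
  a p.2 * fderiv ℝ f p (1, 0) - E p.1 * fderiv ℝ f p (0, 1)

variable {a E : ℝ → ℝ} {f g h : ℝ × ℝ → ℝ}

lemma advection_mul {p : ℝ × ℝ} (hf : DifferentiableAt ℝ f p) (hg : DifferentiableAt ℝ g p) :
    advection a E (f * g) p = g p * advection a E f p + f p * advection a E g p := by
  simp only [advection, fderiv_mul hf hg, add_apply, smul_apply, smul_eq_mul]
  ring

lemma continuous_fderiv_apply_const (hf : ContDiff ℝ 1 f) (w : ℝ × ℝ) :
    Continuous fun p => fderiv ℝ f p w :=
  (hf.continuous_fderiv one_ne_zero).clm_apply continuous_const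

lemma intervalIntegral_fderiv_fst (hh : ContDiff ℝ 1 h) (x₀ x₁ v : ℝ) :
    ∫ x in x₀..x₁, fderiv ℝ h (x, v) (1, 0) = h (x₁, v) - h (x₀, v) := by
  have := continuous_fderiv_apply_const hh
  refine intervalIntegral.integral_eq_sub_of_hasDerivAt (f := fun x => h (x, v)) (fun x _ => ?_)
    (Continuous.intervalIntegrable (by fun_prop) _ _)
  exact (hh.differentiable one_ne_zero _).hasFDerivAt.comp_hasDerivAt x
    ((hasDerivAt_id x).prodMk (hasDerivAt_const x v))

lemma intervalIntegral_fderiv_snd (hh : ContDiff ℝ 1 h) (x v₀ v₁ : ℝ) :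
    ∫ v in v₀..v₁, fderiv ℝ h (x, v) (0, 1) = h (x, v₁) - h (x, v₀) := by
  have := continuous_fderiv_apply_const hh
  refine intervalIntegral.integral_eq_sub_of_hasDerivAt (f := fun v => h (x, v)) (fun v _ => ?_)
    (Continuous.intervalIntegrable (by fun_prop) _ _)
  exact (hh.differentiable one_ne_zero _).hasFDerivAt.comp_hasDerivAt v
    ((hasDerivAt_const v x).prodMk (hasDerivAt_id v))

lemma intervalIntegral_swap_of_continuous {F : ℝ → ℝ → ℝ} (hF : Continuous F.uncurry)
    (x₀ x₁ v₀ v₁ : ℝ) :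
    ∫ x in x₀..x₁, ∫ v in v₀..v₁, F x v = ∫ v in v₀..v₁, ∫ x in x₀..x₁, F x v := by
  refine intervalIntegral_intervalIntegral_swap ?_
  exact (hF.continuousOn.integrableOn_compact (isCompact_uIcc.prod isCompact_uIcc)).mono_set
    (Set.prod_mono Set.uIoc_subset_uIcc Set.uIoc_subset_uIcc)

lemma continuous_mul_advection_right (ha : Continuous a) (hg : Continuous g)
    (hf : ContDiff ℝ 1 f) (x : ℝ) : Continuous fun v => g (x, v) * advection a E f (x, v) := by
  have := continuous_fderiv_apply_const hf
  simp only [advection]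
  fun_prop

lemma intervalIntegral_mul_advection (ha : Continuous a) (hg : Continuous g)
    (hf : ContDiff ℝ 1 f) (x v₀ v₁ : ℝ) :
    ∫ v in v₀..v₁, g (x, v) * advection a E f (x, v)
      = (∫ v in v₀..v₁, a v * (g (x, v) * fderiv ℝ f (x, v) (1, 0)))
        - E x * ∫ v in v₀..v₁, g (x, v) * fderiv ℝ f (x, v) (0, 1) := by
  have := continuous_fderiv_apply_const hf
  rw [← intervalIntegral.integral_const_mul, ← intervalIntegral.integral_sub
    (Continuous.intervalIntegrable (by fun_prop) _ _)
    (Continuous.intervalIntegrable (by fun_prop) _ _)]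
  refine intervalIntegral.integral_congr fun v _ => ?_
  simp only [advection]
  ring

variable {x₀ x₁ : ℝ}

lemma intervalIntegrable_intervalIntegral_mul_advection (ha : Continuous a)
    (hE : IntervalIntegrable E volume x₀ x₁) (hg : Continuous g) (hf : ContDiff ℝ 1 f)
    (v₀ v₁ : ℝ) :
    IntervalIntegrable (fun x => ∫ v in v₀..v₁, g (x, v) * advection a E f (x, v))
      volume x₀ x₁ := by
  have := continuous_fderiv_apply_const hf
  simp_rw [intervalIntegral_mul_advection ha hg hf]
  exact (Continuous.intervalIntegrable (by fun_prop) _ _).sub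
    (hE.mul_continuousOn (Continuous.continuousOn (by fun_prop)))

lemma integral_mul_advection_add_integral_mul_advection (ha : Continuous a)
    (hE : IntervalIntegrable E volume x₀ x₁) (hf : ContDiff ℝ 1 f) (hg : ContDiff ℝ 1 g)
    (v₀ v₁ : ℝ) :
    (∫ x in x₀..x₁, ∫ v in v₀..v₁, g (x, v) * advection a E f (x, v))
      + (∫ x in x₀..x₁, ∫ v in v₀..v₁, f (x, v) * advection a E g (x, v))
      = ∫ x in x₀..x₁, ∫ v in v₀..v₁, advection a E (f * g) (x, v) := by
  rw [← intervalIntegral.integral_add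
    (intervalIntegrable_intervalIntegral_mul_advection ha hE hg.continuous hf v₀ v₁)
    (intervalIntegrable_intervalIntegral_mul_advection ha hE hf.continuous hg v₀ v₁)]
  refine intervalIntegral.integral_congr fun x _ => ?_
  simp only [advection_mul (hf.differentiable one_ne_zero _) (hg.differentiable one_ne_zero _)]
  exact (intervalIntegral.integral_add
    ((continuous_mul_advection_right ha hg.continuous hf x).intervalIntegrable _ _)
    ((continuous_mul_advection_right ha hf.continuous hg x).intervalIntegrable _ _)).symm

-- Mathlib's divergence theorem would require `E` to be differentiable.
theorem integral_advection (ha : Continuous a) (hE : IntervalIntegrable E volume x₀ x₁)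
    (hh : ContDiff ℝ 1 h) (v₀ v₁ : ℝ) :
    ∫ x in x₀..x₁, ∫ v in v₀..v₁, advection a E h (x, v)
      = (∫ v in v₀..v₁, a v * (h (x₁, v) - h (x₀, v)))
        - ∫ x in x₀..x₁, E x * (h (x, v₁) - h (x, v₀)) := by
  have hc := hh.continuous
  have := continuous_fderiv_apply_const hh
  have hinner (x : ℝ) : ∫ v in v₀..v₁, advection a E h (x, v)
      = (∫ v in v₀..v₁, a v * fderiv ℝ h (x, v) (1, 0)) - E x * (h (x, v₁) - h (x, v₀)) := by
    simpa only [Pi.one_apply, one_mul, intervalIntegral_fderiv_snd hh] using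
      intervalIntegral_mul_advection (E := E) ha continuous_one hh x v₀ v₁
  have hswap : ∫ x in x₀..x₁, ∫ v in v₀..v₁, a v * fderiv ℝ h (x, v) (1, 0)
      = ∫ v in v₀..v₁, a v * (h (x₁, v) - h (x₀, v)) := by
    rw [intervalIntegral_swap_of_continuous (by fun_prop)]
    simp only [intervalIntegral.integral_const_mul, intervalIntegral_fderiv_fst hh]
  simp_rw [hinner]
  rw [intervalIntegral.integral_sub (Continuous.intervalIntegrable (by fun_prop) _ _)
    (hE.mul_continuousOn (Continuous.continuousOn (by fun_prop))), hswap]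

theorem integral_mul_advection_add_of_periodic (ha : Continuous a)
    (hE : IntervalIntegrable E volume x₀ x₁) (hf : ContDiff ℝ 1 f) (hg : ContDiff ℝ 1 g)
    {v₀ v₁ : ℝ} (hfper : ∀ v ∈ Set.uIcc v₀ v₁, f (x₀, v) = f (x₁, v))
    (hgper : ∀ v ∈ Set.uIcc v₀ v₁, g (x₀, v) = g (x₁, v)) :
    (∫ x in x₀..x₁, ∫ v in v₀..v₁, g (x, v) * advection a E f (x, v))
      + (∫ x in x₀..x₁, ∫ v in v₀..v₁, f (x, v) * advection a E g (x, v))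
      = -∫ x in x₀..x₁, E x * (f (x, v₁) * g (x, v₁) - f (x, v₀) * g (x, v₀)) := by
  have hboundary : ∫ v in v₀..v₁, a v * ((f * g) (x₁, v) - (f * g) (x₀, v)) = 0 := by
    rw [intervalIntegral.integral_congr (g := fun _ => (0 : ℝ)) fun v hv => by
      simp [hfper v hv, hgper v hv], intervalIntegral.integral_zero]
  rw [integral_mul_advection_add_integral_mul_advection ha hE hf hg,
    integral_advection (h := f * g) ha hE (hf.mul hg), hboundary, zero_sub]
  rfl

end Advection

lemma setIntegral_Ioo_eq_intervalIntegral {s t : ℝ} (hst : s ≤ t) (u : ℝ → ℝ) :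
    ∫ y in Set.Ioo s t, u y = ∫ y in s..t, u y := by
  rw [intervalIntegral.integral_of_le hst, integral_Ioc_eq_integral_Ioo]

theorem stmt4_general {x₀ x₁ vmin vmax : ℝ} (hx : x₀ ≤ x₁) (hv : vmin ≤ vmax)
    {ι : Type*} [Fintype ι] [DecidableEq ι] {φ : ι → ℝ → ℝ}
    (hφ : ∀ n, AEStronglyMeasurable (φ n) (volume.restrict (Set.Ioo vmin vmax)))
    (hortho : ∀ n m, ∫ v in Set.Ioo vmin vmax, φ n v * φ m v = if n = m then 1 else 0)
    {f g : ℝ × ℝ → ℝ} (hf : ContDiff ℝ 1 f) (hg : ContDiff ℝ 1 g)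
    (hgspan : ∀ x ∈ Set.Ioo x₀ x₁, ∃ c : ι → ℝ,
      ∀ v ∈ Set.Icc vmin vmax, g (x, v) = ∑ n, c n * φ n v)
    (hfper : ∀ v ∈ Set.Icc vmin vmax, f (x₀, v) = f (x₁, v))
    (hgper : ∀ v ∈ Set.Icc vmin vmax, g (x₀, v) = g (x₁, v))
    {a E : ℝ → ℝ} (ha : Continuous a) (hE : IntervalIntegrable E volume x₀ x₁)
    {R : ℝ × ℝ → ℝ}
    (hR : ∀ x v, R (x, v) = -(1 / 2) * E x *
      (f (x, vmax) * projectionKernel φ vmax v - f (x, vmin) * projectionKernel φ vmin v)) :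
    (∫ x in Set.Ioo x₀ x₁, ∫ v in Set.Ioo vmin vmax, g (x, v) * advection a E f (x, v))
      + (∫ x in Set.Ioo x₀ x₁, ∫ v in Set.Ioo vmin vmax, f (x, v) * advection a E g (x, v))
      = 2 * ∫ x in Set.Ioo x₀ x₁, ∫ v in Set.Ioo vmin vmax, g (x, v) * R (x, v) := by
  have hφ2 (n : ι) : MemLp (φ n) 2 (volume.restrict (Set.Ioo vmin vmax)) :=
    memLp_two_of_integral_mul_self_ne_zero (hφ n) (by simp [hortho])
  have hpenalty : ∀ x ∈ Set.Ioo x₀ x₁, ∫ v in Set.Ioo vmin vmax, g (x, v) * R (x, v)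
      = -(1 / 2) * (E x * (f (x, vmax) * g (x, vmax) - f (x, vmin) * g (x, vmin))) := by
    intro x hxI
    obtain ⟨c, hc⟩ := hgspan x hxI
    have hcae : (fun v => g (x, v)) =ᵐ[volume.restrict (Set.Ioo vmin vmax)]
        fun v => ∑ n, c n * φ n v :=
      ae_restrict_of_forall_mem measurableSet_Ioo fun v hvI => hc v (Set.Ioo_subset_Icc_self hvI)
    have hkernel := integral_mul_sub_projectionKernel hφ2 hortho hcae
      (hc vmin (Set.left_mem_Icc.2 hv)) (hc vmax (Set.right_mem_Icc.2 hv))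
      (f (x, vmin)) (f (x, vmax))
    simp_rw [hR, mul_left_comm (g _), integral_const_mul, hkernel, mul_assoc]
  rw [setIntegral_congr_fun measurableSet_Ioo hpenalty, integral_const_mul]
  simp_rw [setIntegral_Ioo_eq_intervalIntegral hv, setIntegral_Ioo_eq_intervalIntegral hx]
  rw [← Set.uIcc_of_le hv] at hfper hgper
  rw [integral_mul_advection_add_of_periodic ha hE hf hg hfper hgper]
  ring

/-- For `f^N`, `g` continuously differentiable, in the velocity span and
2π-periodic in `x`, and `E^N` continuous periodic, with `F^N = (v, −E^N)`,
`∫_Ω g (F^N·∇f^N) + ∫_Ω f^N (F^N·∇g) = 2 ∫_Ω g R^N`. -/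
theorem stmt4 (vmin vmax : ℝ) (hv : vmin < vmax)
    (NS : ℕ) (hNS : 1 ≤ NS) (φ : Fin NS → ℝ → ℝ)
    (hφc : ∀ n, ContinuousOn (φ n) (Set.Icc vmin vmax))
    (hortho : ∀ n m : Fin NS,
      (∫ v in Set.Ioo vmin vmax, φ n v * φ m v) = if n = m then (1 : ℝ) else 0)
    (fN g : ℝ × ℝ → ℝ)
    (hfN : ContDiff ℝ 1 fN) (hg : ContDiff ℝ 1 g)
    (hfNspan : ∀ x ∈ Set.Ico (0 : ℝ) (2 * π), ∃ c : Fin NS → ℝ,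
      ∀ v ∈ Set.Icc vmin vmax, fN (x, v) = ∑ n, c n * φ n v)
    (hgspan : ∀ x ∈ Set.Ico (0 : ℝ) (2 * π), ∃ c : Fin NS → ℝ,
      ∀ v ∈ Set.Icc vmin vmax, g (x, v) = ∑ n, c n * φ n v)
    (hfNper : ∀ v ∈ Set.Icc vmin vmax, fN (0, v) = fN (2 * π, v))
    (hgper : ∀ v ∈ Set.Icc vmin vmax, g (0, v) = g (2 * π, v))
    (EN : ℝ → ℝ) (hENc : Continuous EN) (hENper : EN 0 = EN (2 * π))
    (RN : ℝ × ℝ → ℝ)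
    (hRN : ∀ x v, RN (x, v) = -(1 / 2) * EN x *
      (fN (x, vmax) * (∑ n, φ n vmax * φ n v) - fN (x, vmin) * (∑ n, φ n vmin * φ n v))) :
    (∫ x in Set.Ioo (0 : ℝ) (2 * π), ∫ v in Set.Ioo vmin vmax,
        g (x, v) * (v * fderiv ℝ fN (x, v) (1, 0) - EN x * fderiv ℝ fN (x, v) (0, 1)))
      + (∫ x in Set.Ioo (0 : ℝ) (2 * π), ∫ v in Set.Ioo vmin vmax,
        fN (x, v) * (v * fderiv ℝ g (x, v) (1, 0) - EN x * fderiv ℝ g (x, v) (0, 1)))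
      = 2 * ∫ x in Set.Ioo (0 : ℝ) (2 * π), ∫ v in Set.Ioo vmin vmax,
          g (x, v) * RN (x, v) :=
  stmt4_general two_pi_pos.le hv.le
    (fun n => ((hφc n).mono Set.Ioo_subset_Icc_self).aestronglyMeasurable measurableSet_Ioo)
    hortho hfN hg (fun x hx => hgspan x (Set.Ioo_subset_Ico_self hx)) hfNper hgper
    continuous_id (hENc.intervalIntegrable _ _) hRN
end
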